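/- For every closed term M of Λ⊕, the call-by-value small-step semantics is compositional: (1) if M is a value V, then ⟦M⟧v = {V^1}; (2) if M is an application N L, then ⟦M⟧v = Σ_{λx.P∈supp(⟦N⟧v), V∈supp(⟦L⟧v)} ⟦N⟧v(λx.P)·⟦L⟧v(V)·⟦P[V/x]⟧v; (3) if M is a sum N ⊕ L, then ⟦M⟧v = ½·⟦N⟧v·(Σ⟦L⟧v) + ½·⟦L⟧v·(Σ⟦N⟧v). -/

import Mathlib

open scoped ENNReal

/-- Terms of Λ⊕ (and of Λ⊕⁺), in de Bruijn notation: variables, abstractions,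
applications and binary (probabilistic) sums.  De Bruijn indices realize
"terms up to renaming of bound variables". -/
inductive Term : Type
  | var : ℕ → Term
  | lam : Term → Term
  | app : Term → Term → Term
  | choice : Term → Term → Term
  deriving DecidableEq

namespace Term

/-- Values: variables and abstractions. -/
inductive IsValue : Term → Prop
  | var (n : ℕ) : IsValue (var n)
  | lam (M : Term) : IsValue (lam M)

/-- Boolean value test. -/
def isVal : Term → Bool
  | var _ => true
  | lam _ => true
  | _ => false

/-- Shifting of de Bruijn indices: add `d` to all indices `≥ c`. -/
def shift (d c : ℕ) : Term → Term
  | var n => if n < c then var n else var (n + d)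
  | lam M => lam (shift d (c + 1) M)
  | app M N => app (shift d c M) (shift d c N)
  | choice M N => choice (shift d c M) (shift d c N)

/-- Capture-avoiding substitution `M[j := N]` (the variable `j` is consumed and
higher indices are decremented, as in a β-step). -/
def subst : Term → ℕ → Term → Term
  | var n, j, N => if n = j then shift j 0 N else if j < n then var (n - 1) else var n
  | lam M, j, N => lam (subst M (j + 1) N)
  | app M L, j, N => app (subst M j N) (subst L j N)
  | choice M L, j, N => choice (subst M j N) (subst L j N)

/-- All free indices are `< n`. -/
def closedUnder : Term → ℕ → Prop
  | var m, n => m < n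
  | lam M, n => closedUnder M (n + 1)
  | app M N, n => closedUnder M n ∧ closedUnder N n
  | choice M N, n => closedUnder M n ∧ closedUnder N n

/-- Closed terms: no free variables. -/
def Closed (M : Term) : Prop := closedUnder M 0

end Term

/-- (Sub)distributions are represented as functions from terms into `ℝ≥0∞`;
genuine distributions (`IsDist`) are supported on values and have mass `≤ 1`. -/
abbrev PDist := Term → ℝ≥0∞

/-- The sum (total mass) `Σ𝒟` of a distribution. -/
noncomputable def dsum (D : PDist) : ℝ≥0∞ := ∑' M, D M

/-- The support of a distribution. -/
def dsupp (D : PDist) : Set Term := {M | D M ≠ 0}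

/-- The everywhere-zero distribution `∅`. -/
noncomputable def dzero : PDist := fun _ => 0

/-- The Dirac distribution `{V^1}`. -/
noncomputable def dirac (V : Term) : PDist := fun M => if M = V then 1 else 0

/-- Being a genuine (sub)probability distribution: supported on values, with
total mass at most one. -/
def IsDist (D : PDist) : Prop := (∀ M, D M ≠ 0 → M.IsValue) ∧ dsum D ≤ 1

/-- Call-by-value reduction `↦v`, relating a term to the (equiprobable) finite
sequence of its possible reducts. -/
inductive RedV : Term → List Term → Prop
  | beta {M V : Term} : V.IsValue → RedV (.app (.lam M) V) [M.subst 0 V]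
  | choice {V W : Term} : V.IsValue → W.IsValue → RedV (.choice V W) [V, W]
  | appL {M N : Term} {Ls : List Term} :
      RedV M Ls → RedV (.app M N) (Ls.map (fun L => .app L N))
  | appR {V M : Term} {Ns : List Term} :
      V.IsValue → RedV M Ns → RedV (.app V M) (Ns.map (fun L => .app V L))
  | choiceL {M N : Term} {Ls : List Term} :
      RedV M Ls → RedV (.choice M N) (Ls.map (fun L => .choice L N))
  | choiceR {V M : Term} {Ns : List Term} :
      V.IsValue → RedV M Ns → RedV (.choice V M) (Ns.map (fun L => .choice V L))

/-- Call-by-name reduction `↦n`. -/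
inductive RedN : Term → List Term → Prop
  | beta {M N : Term} : RedN (.app (.lam M) N) [M.subst 0 N]
  | choice {M N : Term} : RedN (.choice M N) [M, N]
  | appL {M N : Term} {Ls : List Term} :
      RedN M Ls → RedN (.app M N) (Ls.map (fun L => .app L N))

/-- The inductive small-step convergence relation `⇒`, parametric in the
underlying reduction relation: any term evaluates to `∅`; a value `V`
evaluates to `{V^1}`; and if `M ↦ N₁,…,Nₙ` and `Nᵢ ⇒ 𝒟ᵢ` then
`M ⇒ Σᵢ (1/n)𝒟ᵢ`. -/
inductive Conv (Red : Term → List Term → Prop) : Term → PDist → Prop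
  | bot (M : Term) : Conv Red M dzero
  | val {V : Term} : V.IsValue → Conv Red V (dirac V)
  | step {M : Term} {Ns : List Term} (Ds : Fin Ns.length → PDist) :
      Red M Ns → (∀ i, Conv Red (Ns.get i) (Ds i)) →
      Conv Red M (fun W => (∑ i, Ds i W) / (Ns.length : ℝ≥0∞))

/-- Call-by-value small-step convergence `⇒v`. -/
def SmallV : Term → PDist → Prop := Conv RedV

/-- Call-by-name small-step convergence `⇒n`. -/
def SmallN : Term → PDist → Prop := Conv RedN

/-- The small-step semantics `⟦M⟧`: the pointwise supremum of all distributions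
derivable for `M`. -/
noncomputable def semOf (S : Term → PDist → Prop) (M : Term) : PDist :=
  fun W => ⨆ (D : PDist) (_ : S M D), D W

/-- Call-by-value small-step semantics `⟦M⟧v`. -/
noncomputable def semV : Term → PDist := semOf SmallV

/-- Call-by-name small-step semantics `⟦M⟧n`. -/
noncomputable def semN : Term → PDist := semOf SmallN

/-- One-step unfolding of the divergence inference system: a value diverges
with probability `0`; if `M ↦ N₁,…,Nₙ` and `Nᵢ` diverges with probability
`pᵢ`, then `M` diverges with probability `Σᵢ (1/n)pᵢ`. -/
def DivStep (Red : Term → List Term → Prop) (R : Term → ℝ≥0∞ → Prop)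
    (M : Term) (p : ℝ≥0∞) : Prop :=
  (M.IsValue ∧ p = 0) ∨
    ∃ (Ns : List Term) (ps : Fin Ns.length → ℝ≥0∞),
      Red M Ns ∧ (∀ i, R (Ns.get i) (ps i)) ∧ p = (∑ i, ps i) / (Ns.length : ℝ≥0∞)

/-- The coinductively-defined divergence relation `⇓div`: the union of all
consistent relations between terms and probabilities in `[0,1]`. -/
def Diverges (Red : Term → List Term → Prop) (M : Term) (p : ℝ≥0∞) : Prop :=
  ∃ R : Term → ℝ≥0∞ → Prop,
    (∀ N q, R N q → q ≤ 1 ∧ DivStep Red R N q) ∧ R M p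

/-- Call-by-value divergence `⇓div`. -/
def DivV : Term → ℝ≥0∞ → Prop := Diverges RedV

/-- Call-by-name divergence `⇓div,n`. -/
def DivN : Term → ℝ≥0∞ → Prop := Diverges RedN

/-- One-step unfolding of the call-by-value big-step inference system. -/
def BigVStep (R : Term → PDist → Prop) (M : Term) (D : PDist) : Prop :=
  (M.IsValue ∧ D = dirac M) ∨
  (∃ (N L : Term) (E F : PDist) (G : Term → Term → PDist),
      M = .app N L ∧ R N E ∧ R L F ∧
      (∀ P V, E (.lam P) ≠ 0 → V.IsValue → F V ≠ 0 → R (P.subst 0 V) (G P V)) ∧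
      D = fun W => ∑' (P : Term), ∑' (V : Term), E (.lam P) * F V * G P V W) ∨
  (∃ (N L : Term) (E F : PDist),
      M = .choice N L ∧ R N E ∧ R L F ∧
      D = fun W => (E W * dsum F + F W * dsum E) / 2)

/-- The coinductive call-by-value big-step relation `⇓v`: the union of all
consistent relations between terms and distributions. -/
def BigV (M : Term) (D : PDist) : Prop :=
  ∃ R : Term → PDist → Prop,
    (∀ N E, R N E → IsDist E ∧ BigVStep R N E) ∧ R M D

/-- One-step unfolding of the call-by-name big-step inference system. -/
def BigNStep (R : Term → PDist → Prop) (M : Term) (D : PDist) : Prop :=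
  (M.IsValue ∧ D = dirac M) ∨
  (∃ (N L : Term) (E : PDist) (F : Term → PDist),
      M = .app N L ∧ R N E ∧
      (∀ P, E (.lam P) ≠ 0 → R (P.subst 0 L) (F P)) ∧
      D = fun W => ∑' (P : Term), E (.lam P) * F P W) ∨
  (∃ (N L : Term) (E F : PDist),
      M = .choice N L ∧ R N E ∧ R L F ∧ D = fun W => (E W + F W) / 2)

/-- The coinductive call-by-name big-step relation `⇓n`. -/
def BigN (M : Term) (D : PDist) : Prop :=
  ∃ R : Term → PDist → Prop,
    (∀ N E, R N E → IsDist E ∧ BigNStep R N E) ∧ R M D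

/-- Big-step semantics `⟪M⟫`: the pointwise infimum of all distributions
derivable for `M` in a big-step system. -/
noncomputable def bigSemOf (B : Term → PDist → Prop) (M : Term) : PDist :=
  fun W => ⨅ (D : PDist) (_ : B M D), D W

open Term

theorem RedV.not_value {M : Term} {Ns : List Term} (h : RedV M Ns) : ¬ M.IsValue := by
  intro hv
  cases h <;> cases hv

theorem RedV.det {M : Term} {Ns : List Term} (h : RedV M Ns) :
    ∀ {Ns' : List Term}, RedV M Ns' → Ns = Ns' := by
  induction h with
  | beta hV =>
    intro Ns' h'
    cases h' with
    | beta _ => rfl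
    | appL h => exact absurd (IsValue.lam _) h.not_value
    | appR _ h => exact absurd hV h.not_value
  | choice hV hW =>
    intro Ns' h'
    cases h' with
    | choice _ _ => rfl
    | choiceL h => exact absurd hV h.not_value
    | choiceR _ h => exact absurd hW h.not_value
  | appL h ih =>
    intro Ns' h'
    cases h' with
    | beta _ => exact absurd (IsValue.lam _) h.not_value
    | appL h2 => rw [ih h2]
    | appR hv _ => exact absurd hv h.not_value
  | appR hV h ih =>
    intro Ns' h'
    cases h' with
    | beta hv => exact absurd hv h.not_value
    | appL h2 => exact absurd hV h2.not_value
    | appR hv h2 => rw [ih h2]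
  | choiceL h ih =>
    intro Ns' h'
    cases h' with
    | choice hv _ => exact absurd hv h.not_value
    | choiceL h2 => rw [ih h2]
    | choiceR hv _ => exact absurd hv h.not_value
  | choiceR hV h ih =>
    intro Ns' h'
    cases h' with
    | choice _ hv => exact absurd hv h.not_value
    | choiceL h2 => exact absurd hV h2.not_value
    | choiceR hv h2 => rw [ih h2]

open Classical in
/-- Evaluation with fuel. -/
noncomputable def evV : ℕ → Term → PDist
  | 0, _ => fun _ => 0
  | k + 1, M => fun W =>
      if M.IsValue then dirac M W
      else if h : ∃ Ns, RedV M Ns then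
        ((Classical.choose h).map (fun N => evV k N W)).sum / ((Classical.choose h).length : ℝ≥0∞)
      else 0

theorem evV_value {M : Term} (h : M.IsValue) (k : ℕ) (W : Term) :
    evV (k + 1) M W = dirac M W := by
  simp [evV, h]

theorem evV_step {M : Term} {Ns : List Term} (h : RedV M Ns) (k : ℕ) (W : Term) :
    evV (k + 1) M W = (Ns.map (fun N => evV k N W)).sum / (Ns.length : ℝ≥0∞) := by
  have hex : ∃ Ns, RedV M Ns := ⟨Ns, h⟩
  have e : Classical.choose hex = Ns := (Classical.choose_spec hex).det h
  simp only [evV, h.not_value, if_false]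
  rw [dif_pos hex, e]

theorem evV_stuck {M : Term} (h : ¬ M.IsValue) (h2 : ¬ ∃ Ns, RedV M Ns) (k : ℕ) (W : Term) :
    evV k M W = 0 := by
  cases k with
  | zero => rfl
  | succ k => simp only [evV, h, if_false]; rw [dif_neg h2]

theorem evV_succ (k : ℕ) : ∀ M W, evV k M W ≤ evV (k + 1) M W := by
  induction k with
  | zero => intro M W; simp [evV]
  | succ k ih =>
    intro M W
    by_cases hv : M.IsValue
    · rw [evV_value hv, evV_value hv]
    by_cases hr : ∃ Ns, RedV M Ns
    · obtain ⟨Ns, hr⟩ := hr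
      rw [evV_step hr, evV_step hr]
      apply ENNReal.div_le_div_right
      exact List.sum_le_sum (fun N _ => ih N W)
    · rw [evV_stuck hv hr, evV_stuck hv hr]

theorem evV_mono (M W : Term) : Monotone (fun k => evV k M W) :=
  monotone_nat_of_le_succ (fun k => evV_succ k M W)

theorem list_sum_fin (l : List Term) (f : Term → ℝ≥0∞) :
    (l.map f).sum = ∑ i, f (l.get i) := by
  rw [← List.sum_ofFn]
  congr 1
  apply List.ext_get <;> simp

theorem evV_conv (k : ℕ) : ∀ M, SmallV M (evV k M) := by
  induction k with
  | zero => intro M; exact Conv.bot M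
  | succ k ih =>
    intro M
    by_cases hv : M.IsValue
    · have : evV (k + 1) M = dirac M := funext (evV_value hv k)
      rw [this]; exact Conv.val hv
    by_cases hr : ∃ Ns, RedV M Ns
    · obtain ⟨Ns, hr⟩ := hr
      have := Conv.step (Red := RedV) (fun i => evV k (Ns.get i)) hr (fun i => ih _)
      unfold SmallV
      convert this using 1
      funext W
      rw [evV_step hr, list_sum_fin]
    · have : evV (k + 1) M = dzero := funext (evV_stuck hv hr _)
      rw [this]; exact Conv.bot M

theorem conv_le_evV {M : Term} {D : PDist} (h : Conv RedV M D) :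
    ∃ k, ∀ W, D W ≤ evV k M W := by
  induction h with
  | bot M => exact ⟨0, fun W => by simp [dzero]⟩
  | val hV => exact ⟨1, fun W => (evV_value hV 0 W).ge⟩
  | step Ds hr _ ih =>
    choose k hk using ih
    refine ⟨Finset.univ.sup k + 1, fun W => ?_⟩
    rw [evV_step hr, list_sum_fin]
    apply ENNReal.div_le_div_right
    refine Finset.sum_le_sum (fun i _ => (hk i W).trans ?_)
    exact evV_mono _ W (Finset.le_sup (Finset.mem_univ i))

theorem semV_eq_iSup (M W : Term) : semV M W = ⨆ k, evV k M W := by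
  apply le_antisymm
  · refine iSup₂_le (fun D hD => ?_)
    obtain ⟨k, hk⟩ := conv_le_evV hD
    exact (hk W).trans (le_iSup (fun k => evV k M W) k)
  · refine iSup_le (fun k => ?_)
    exact le_iSup₂ (f := fun (D : PDist) (_ : SmallV M D) => D W) (evV k M) (evV_conv k M)

theorem evV_le_semV (k : ℕ) (M W : Term) : evV k M W ≤ semV M W := by
  rw [semV_eq_iSup]; exact le_iSup (fun k => evV k M W) k

theorem semV_eq_iSup_succ (M W : Term) : semV M W = ⨆ k, evV (k + 1) M W := by
  rw [semV_eq_iSup]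
  exact ((evV_mono M W).iSup_nat_add 1).symm

theorem semV_value {M : Term} (h : M.IsValue) : semV M = dirac M := by
  funext W
  rw [semV_eq_iSup_succ]
  simp [evV_value h]

theorem semV_step {M : Term} {Ns : List Term} (h : RedV M Ns) (W : Term) :
    semV M W = (Ns.map (fun N => semV N W)).sum / (Ns.length : ℝ≥0∞) := by
  rw [semV_eq_iSup_succ]
  simp only [evV_step h, list_sum_fin, semV_eq_iSup]
  rw [← ENNReal.iSup_div, ENNReal.finsetSum_iSup_of_monotone]
  intro i
  exact evV_mono _ W

theorem semV_stuck {M : Term} (h : ¬ M.IsValue) (h2 : ¬ ∃ Ns, RedV M Ns) (W : Term) :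
    semV M W = 0 := by
  rw [semV_eq_iSup]
  simp [evV_stuck h h2]

theorem evV_supp (k : ℕ) : ∀ M W, ¬ W.IsValue → evV k M W = 0 := by
  induction k with
  | zero => intro M W _; rfl
  | succ k ih =>
    intro M W hW
    by_cases hv : M.IsValue
    · rw [evV_value hv, dirac, if_neg]
      rintro rfl; exact hW hv
    by_cases hr : ∃ Ns, RedV M Ns
    · obtain ⟨Ns, hr⟩ := hr
      rw [evV_step hr, list_sum_fin]
      simp [ih _ W hW]
    · exact evV_stuck hv hr _ _

theorem semV_supp (M W : Term) (hW : ¬ W.IsValue) : semV M W = 0 := by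
  rw [semV_eq_iSup]; simp [evV_supp _ M W hW]

theorem tsum_dirac (M : Term) (K : Term → ℝ≥0∞) : ∑' V, dirac M V * K V = K M := by
  rw [tsum_eq_single M]
  · simp [dirac]
  · intro V hV; simp [dirac, hV]

theorem avg_tsum (l : List Term) (f : Term → PDist) (K : Term → ℝ≥0∞) :
    ∑' V, ((l.map (fun N => f N V)).sum / (l.length : ℝ≥0∞)) * K V =
      (l.map (fun N => ∑' V, f N V * K V)).sum / (l.length : ℝ≥0∞) := by
  simp only [list_sum_fin]
  rw [← Summable.tsum_finsetSum (fun i _ => ENNReal.summable), div_eq_mul_inv,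
    ← ENNReal.tsum_mul_right]
  refine tsum_congr (fun V => ?_)
  rw [div_eq_mul_inv, ← Finset.sum_mul]
  ring

theorem tsum_semV_le {M : Term} {K : Term → ℝ≥0∞} {X : ℝ≥0∞}
    (h : ∀ k, ∑' V, evV k M V * K V ≤ X) : ∑' V, semV M V * K V ≤ X := by
  rw [ENNReal.tsum_eq_iSup_sum]
  refine iSup_le (fun s => ?_)
  simp only [semV_eq_iSup, ENNReal.iSup_mul]
  rw [ENNReal.finsetSum_iSup_of_monotone]
  · exact iSup_le (fun k => (ENNReal.sum_le_tsum s).trans (h k))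
  · intro V i j hij
    exact mul_le_mul_left (evV_mono M V hij) _

/-- Evaluation contexts compose by binding. -/
theorem semV_bind (C : Term → Term) (hC : ∀ M, ¬ (C M).IsValue)
    (hstep : ∀ M Ns, RedV M Ns → RedV (C M) (Ns.map C))
    (hstuck : ∀ M Ns, RedV (C M) Ns → ¬ M.IsValue → ∃ Ms, RedV M Ms) (M W : Term) :
    semV (C M) W = ∑' V, semV M V * semV (C V) W := by
  apply le_antisymm
  · rw [semV_eq_iSup]
    refine iSup_le (fun k => ?_)
    induction k generalizing M with
    | zero => simp [evV]
    | succ k ih =>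
      by_cases hv : M.IsValue
      · rw [semV_value hv, tsum_dirac]; exact evV_le_semV _ _ _
      by_cases hr : ∃ Ns, RedV M Ns
      · obtain ⟨Ns, hr⟩ := hr
        simp only [semV_step hr]
        rw [evV_step (hstep _ _ hr), avg_tsum, List.map_map, List.length_map]
        apply ENNReal.div_le_div_right
        exact List.sum_le_sum (fun N _ => ih N)
      · rw [evV_stuck (hC M)]
        · exact zero_le
        · rintro ⟨Ns, h⟩; exact hr (hstuck _ _ h hv)
  · apply tsum_semV_le
    intro k
    induction k generalizing M with
    | zero => simp [evV]
    | succ k ih =>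
      by_cases hv : M.IsValue
      · simp only [evV_value hv]
        rw [tsum_dirac]
      by_cases hr : ∃ Ns, RedV M Ns
      · obtain ⟨Ns, hr⟩ := hr
        simp only [evV_step hr]
        rw [semV_step (hstep _ _ hr), avg_tsum, List.map_map, List.length_map]
        apply ENNReal.div_le_div_right
        exact List.sum_le_sum (fun N _ => ih N)
      · simp [evV_stuck hv hr]

theorem semV_app_left (N L W : Term) :
    semV (.app N L) W = ∑' V, semV N V * semV (.app V L) W := by
  refine semV_bind (fun N => .app N L) (fun M h => by cases h) (fun M Ns h => .appL h) ?_ N W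
  intro M Ns h hv
  cases h with
  | beta _ => exact absurd (IsValue.lam _) hv
  | appL h => exact ⟨_, h⟩
  | appR h _ => exact absurd h hv

theorem semV_app_right {U : Term} (hU : U.IsValue) (L W : Term) :
    semV (.app U L) W = ∑' V, semV L V * semV (.app U V) W := by
  refine semV_bind (fun L => .app U L) (fun M h => by cases h) (fun M Ns h => .appR hU h) ?_ L W
  intro M Ns h hv
  cases h with
  | beta h => exact absurd h hv
  | appL h => exact absurd hU h.not_value
  | appR _ h => exact ⟨_, h⟩

theorem semV_choice_left (N L W : Term) :
    semV (.choice N L) W = ∑' V, semV N V * semV (.choice V L) W := by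
  refine semV_bind (fun N => .choice N L) (fun M h => by cases h)
    (fun M Ns h => .choiceL h) ?_ N W
  intro M Ns h hv
  cases h with
  | choice h _ => exact absurd h hv
  | choiceL h => exact ⟨_, h⟩
  | choiceR h _ => exact absurd h hv

theorem semV_choice_right {U : Term} (hU : U.IsValue) (L W : Term) :
    semV (.choice U L) W = ∑' V, semV L V * semV (.choice U V) W := by
  refine semV_bind (fun L => .choice U L) (fun M h => by cases h)
    (fun M Ns h => .choiceR hU h) ?_ L W
  intro M Ns h hv
  cases h with
  | choice _ h => exact absurd h hv
  | choiceL h => exact absurd hU h.not_value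
  | choiceR _ h => exact ⟨_, h⟩

theorem semV_app_lam (P L W : Term) :
    semV (.app (.lam P) L) W = ∑' V, semV L V * semV (P.subst 0 V) W := by
  rw [semV_app_right (IsValue.lam P)]
  refine tsum_congr (fun V => ?_)
  by_cases hV : V.IsValue
  · rw [semV_step (RedV.beta hV)]; simp
  · simp [semV_supp L V hV]

theorem semV_app_var (n : ℕ) (L W : Term) : semV (.app (.var n) L) W = 0 := by
  rw [semV_app_right (IsValue.var n), ENNReal.tsum_eq_zero]
  intro V
  by_cases hV : V.IsValue
  · rw [semV_stuck (M := .app (.var n) V), mul_zero]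
    · intro h; cases h
    · rintro ⟨Ns, h⟩
      cases h with
      | appL h => cases h
      | appR _ h => exact h.not_value hV
  · simp [semV_supp L V hV]

theorem semV_app_eq (N L W : Term) :
    semV (.app N L) W = ∑' (P : Term), ∑' (V : Term),
        semV N (.lam P) * semV L V * semV (P.subst 0 V) W := by
  rw [semV_app_left]
  have hinj : Function.Injective Term.lam := fun a b h => by cases h; rfl
  rw [← hinj.tsum_eq]
  · refine tsum_congr (fun P => ?_)
    rw [semV_app_lam, ← ENNReal.tsum_mul_left]
    simp only [mul_assoc]
  · intro V hV
    rw [Function.mem_support] at hV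
    by_cases h : V.IsValue
    · cases h with
      | var n => exact absurd (by rw [semV_app_var, mul_zero]) hV
      | lam P => exact ⟨P, rfl⟩
    · exact absurd (by rw [semV_supp N V h, zero_mul]) hV

theorem semV_choice_val {U : Term} (hU : U.IsValue) (L W : Term) :
    semV (.choice U L) W = (dirac U W * dsum (semV L) + semV L W) / 2 := by
  rw [semV_choice_right hU]
  have h1 : ∀ V, semV L V * semV (.choice U V) W =
      (dirac U W * semV L V) * 2⁻¹ + (dirac W V * semV L V) * 2⁻¹ := by
    intro V
    by_cases hV : V.IsValue
    · rw [semV_step (RedV.choice hU hV)]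
      have : dirac V W = dirac W V := by simp [dirac, eq_comm]
      simp only [List.map_cons, List.map_nil, List.sum_cons, List.sum_nil, List.length_cons,
        List.length_nil, semV_value hU, semV_value hV, this, div_eq_mul_inv]
      norm_num
      ring
    · simp [semV_supp L V hV]
  simp only [h1]
  rw [ENNReal.tsum_add, ENNReal.tsum_mul_right, ENNReal.tsum_mul_right, ENNReal.tsum_mul_left,
    tsum_dirac, dsum, div_eq_mul_inv, add_mul]

theorem semV_choice_eq (N L W : Term) :
    semV (.choice N L) W = (semV N W * dsum (semV L) + semV L W * dsum (semV N)) / 2 := by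
  rw [semV_choice_left]
  have h1 : ∀ V, semV N V * semV (.choice V L) W =
      (dirac W V * semV N V) * (dsum (semV L) * 2⁻¹) + semV N V * (semV L W * 2⁻¹) := by
    intro V
    by_cases hV : V.IsValue
    · rw [semV_choice_val hV]
      have : dirac V W = dirac W V := by simp [dirac, eq_comm]
      rw [this, div_eq_mul_inv]
      ring
    · simp [semV_supp N V hV]
  simp only [h1]
  rw [ENNReal.tsum_add, ENNReal.tsum_mul_right, ENNReal.tsum_mul_right, tsum_dirac,
    div_eq_mul_inv]
  simp only [dsum]
  ring

/-- the call-by-value small-step semantics is compositional. -/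
theorem semV_compositional (M : Term) (hM : M.Closed) :
    (M.IsValue → semV M = dirac M) ∧
    (∀ N L : Term, M = .app N L →
      semV M = fun W => ∑' (P : Term), ∑' (V : Term),
        semV N (.lam P) * semV L V * semV (P.subst 0 V) W) ∧
    (∀ N L : Term, M = .choice N L →
      semV M = fun W =>
        (semV N W * dsum (semV L) + semV L W * dsum (semV N)) / 2) := by
  refine ⟨semV_value, ?_, ?_⟩
  · rintro N L rfl
    funext W
    exact semV_app_eq N L W
  · rintro N L rfl
    funext W
    exact semV_choice_eq N L W
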